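/- For all positive integers n and ℓ, the number of partitions of n into (not necessarily distinct) odd parts having exactly ℓ distinct part values equals the number of partitions of n into distinct parts whose parts form exactly ℓ maximal subsequences of consecutive integers (i.e., exactly ℓ of the parts a satisfy: a+1 is not a part). -/

import Mathlib

/-!
Draw a partition with odd parts `2a₁ + 1 ≥ ⋯ ≥ 2aₖ + 1` so that row `i` has `aᵢ` cells on each side
of a central column.  The central column and the right half of the first row form a hook of
`x = a₁ + k` cells; the left half of the first row and the column left of the centre form a hook of
`y = a₁ + #{i ≥ 2 | aᵢ ≥ 1} < x` cells.  Removing both hooks leaves the diagram of the numbers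
`aᵢ - 1` for `i ≥ 2` and `aᵢ ≥ 1`, and iterating this yields a partition into distinct parts.

In the reverse direction, let `L` be the list obtained from the parts other than `x` and `y`.
Then `y = a₁ + |L|`, the positive entries of `a₂, …, aₖ` are those of `L` increased by one, and
there are `x - y - 1` zero entries.  Hence `0` is a new value exactly when `x > y + 1`.  Since the
largest entry of `L` plus `|L|` is the third part, `a₁` is a new value exactly when `y - 1` is not a
part.  So each of `x` and `y` creates a new value precisely when it starts a new run.  The map is
injective because `x`, `L` and `y` can be read off its value, hence bijective by Euler's theorem
that both kinds of partition are equinumerous.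
-/

open Finset

theorem card_filter_apply_notMem_eq_card_sdiff_image {α : Type*} [DecidableEq α] {f : α → α}
    (hf : f.Injective) (S : Finset α) : #{a ∈ S | f a ∉ S} = #(S \ S.image f) := by
  have hdiff : S.image f \ S = {a ∈ S | f a ∉ S}.image f := by
    ext
    simp only [mem_sdiff, mem_image, mem_filter]
    grind
  rw [card_sdiff_comm (card_image_of_injective S hf).symm, hdiff, card_image_of_injective _ hf]

/-- The least elements of the maximal runs of consecutive integers in `S`.  Counting runs by their
least elements rather than by their greatest ones makes the count easy to update when a new maximum
is added to `S`. -/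
def runMinima (S : Finset ℕ) : Finset ℕ := S \ S.image (· + 1)

theorem card_runMinima (S : Finset ℕ) : #(runMinima S) = #{a ∈ S | a + 1 ∉ S} :=
  (card_filter_apply_notMem_eq_card_sdiff_image (add_left_injective 1) S).symm

theorem card_runMinima_insert {S : Finset ℕ} {x : ℕ} (hS : ∀ a ∈ S, a < x) :
    #(runMinima (insert x S)) = #(runMinima S) + if x - 1 ∈ S then 0 else 1 := by
  have hmin : runMinima (insert x S) = insert x S \ S.image (· + 1) := by
    ext
    simp only [runMinima, mem_sdiff, mem_image, mem_insert]
    grind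
  have hmem : x ∈ S.image (· + 1) ↔ x - 1 ∈ S := by
    simp only [mem_image]
    grind
  rw [hmin]
  split_ifs with h
  · rw [insert_sdiff_of_mem _ (hmem.2 h), add_zero, runMinima]
  · rw [insert_sdiff_of_notMem _ (mt hmem.1 h), runMinima, card_insert_of_notMem]
    exact fun hxS ↦ (hS x (mem_sdiff.1 hxS).1).false

theorem two_mul_add_one_injective : Function.Injective fun a : ℕ ↦ 2 * a + 1 :=
  fun a b h ↦ by simpa using h

theorem le_headD_of_sortedGE {α : Type*} [Preorder α] {L : List α} (hL : L.SortedGE) {a : α}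
    (ha : a ∈ L) (d : α) : a ≤ L.headD d := by
  cases L with
  | nil => simp at ha
  | cons b L =>
    obtain rfl | ha := List.mem_cons.1 ha
    · exact le_rfl
    · exact (List.pairwise_cons.1 hL.pairwise).1 a ha

theorem headD_mem {α : Type*} {L : List α} (hL : L ≠ []) (d : α) : L.headD d ∈ L := by
  cases L with
  | nil => exact absurd rfl hL
  | cons a L => exact List.mem_cons_self

theorem map_succ_append_replicate_zero_inj {L L' : List ℕ} {k k' : ℕ}
    (h : L.map (· + 1) ++ List.replicate k 0 = L'.map (· + 1) ++ List.replicate k' 0) :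
    L = L' := by
  have decode (L : List ℕ) (k : ℕ) :
      ((L.map (· + 1) ++ List.replicate k 0).filter (0 < ·)).map (· - 1) = L := by
    simp [List.filter_map, Function.comp_def]
  rw [← decode L k, h, decode]

/-- The lists that enumerate the parts of a partition into distinct parts in decreasing order.
The first part of such a list `M` is written `M.headD 0`, so that the largest part of the empty
partition is `0`. -/
structure IsStrictPartition (M : List ℕ) : Prop where
  sortedGT : M.SortedGT
  pos : ∀ a ∈ M, 0 < a

namespace IsStrictPartition

variable {x : ℕ} {M : List ℕ}

theorem of_cons (h : IsStrictPartition (x :: M)) : IsStrictPartition M :=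
  ⟨(List.pairwise_cons.1 h.sortedGT.pairwise).2.sortedGT,
    fun a ha ↦ h.pos a (List.mem_cons_of_mem x ha)⟩

theorem tail (h : IsStrictPartition M) : IsStrictPartition M.tail := by
  cases M with
  | nil => exact h
  | cons x M => exact h.of_cons

theorem lt_of_mem (h : IsStrictPartition (x :: M)) {a : ℕ} (ha : a ∈ M) : a < x :=
  (List.pairwise_cons.1 h.sortedGT.pairwise).1 a ha

theorem headD_lt (h : IsStrictPartition (x :: M)) : M.headD 0 < x := by
  cases M with
  | nil => exact h.pos x List.mem_cons_self
  | cons y M => exact h.lt_of_mem List.mem_cons_self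

theorem headD_tail_lt (h : IsStrictPartition M) (hM : M ≠ []) : M.tail.headD 0 < M.headD 0 := by
  cases M with
  | nil => exact absurd rfl hM
  | cons x M => exact h.headD_lt

theorem headD_tail_le (h : IsStrictPartition M) : M.tail.headD 0 ≤ M.headD 0 := by
  cases M with
  | nil => exact le_rfl
  | cons x M => exact h.headD_lt.le

theorem headD_pos_iff (h : IsStrictPartition M) : 0 < M.headD 0 ↔ M ≠ [] := by
  cases M with
  | nil => simp
  | cons x M => simpa using h.pos x List.mem_cons_self

theorem sub_one_mem_iff (h : IsStrictPartition (x :: M)) :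
    x - 1 ∈ M ↔ M ≠ [] ∧ x = M.headD 0 + 1 := by
  have hlt := h.headD_lt
  constructor
  · intro hx
    have := le_headD_of_sortedGE h.of_cons.sortedGT.sortedGE hx 0
    exact ⟨List.ne_nil_of_mem hx, by omega⟩
  · rintro ⟨hM, rfl⟩
    exact headD_mem hM 0

theorem eq_of_headD_eq_of_tail_eq {N : List ℕ} (hM : IsStrictPartition M)
    (hN : IsStrictPartition N) (hhead : M.headD 0 = N.headD 0) (htail : M.tail = N.tail) :
    M = N := by
  have hnil : M ≠ [] ↔ N ≠ [] := by rw [← hM.headD_pos_iff, ← hN.headD_pos_iff, hhead]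
  cases M <;> cases N <;> simp_all

end IsStrictPartition

/-- Sylvester's fish-hook map.  It sends a partition into distinct parts, listed in decreasing
order, to the list `a₁ ≥ a₂ ≥ ⋯` such that `2 * a₁ + 1, 2 * a₂ + 1, …` are the parts of the
corresponding partition into odd parts.  The two largest parts `x > y` are the two outer hooks,
with `y = 0` if there is only one part. -/
def sylvester : List ℕ → List ℕ
  | [] => []
  | x :: M =>
    (M.headD 0 - (sylvester M.tail).length) ::
      ((sylvester M.tail).map (· + 1) ++ List.replicate (x - M.headD 0 - 1) 0)
termination_by M => M.length
decreasing_by all_goals grind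

section sylvester

variable {x : ℕ} {M : List ℕ}

theorem headD_sylvester_add_length (h : IsStrictPartition M) :
    (sylvester M).headD 0 + (sylvester M).length = M.headD 0 := by
  induction M using sylvester.induct with
  | case1 => simp [sylvester]
  | case2 x M ih =>
    have hinner := ih h.of_cons.tail
    have htail := h.of_cons.headD_tail_le
    have hlt := h.headD_lt
    simp only [sylvester, List.headD_cons, List.length_cons, List.length_append, List.length_map,
      List.length_replicate]
    omega

theorem length_sylvester_tail_le (h : IsStrictPartition M) :
    (sylvester M.tail).length ≤ M.headD 0 := by
  have := headD_sylvester_add_length h.tail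
  have := h.headD_tail_le
  omega

theorem sylvester_ne_nil_iff : sylvester M ≠ [] ↔ M ≠ [] := by
  cases M <;> simp [sylvester]

theorem sylvester_sortedGE (h : IsStrictPartition M) : (sylvester M).SortedGE := by
  induction M using sylvester.induct with
  | case1 => simp [sylvester, List.sortedGE_iff_pairwise]
  | case2 x M ih =>
    have hM := h.of_cons
    have hsorted := ih hM.tail
    have hsucc : ∀ c ∈ sylvester M.tail, c + 1 ≤ M.headD 0 - (sylvester M.tail).length := by
      intro c hc
      have := le_headD_of_sortedGE hsorted hc 0
      have := headD_sylvester_add_length hM.tail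
      have : M ≠ [] := by rintro rfl; simp [sylvester] at hc
      have := hM.headD_tail_lt this
      omega
    simp only [sylvester, List.sortedGE_iff_pairwise, List.pairwise_cons, List.pairwise_append,
      List.pairwise_map, List.pairwise_replicate, List.mem_append, List.mem_map,
      List.mem_replicate]
    refine ⟨?_, hsorted.pairwise.imp (Nat.add_le_add_right · 1), by simp, by simp⟩
    rintro _ (⟨c, hc, rfl⟩ | ⟨-, rfl⟩)
    · exact hsucc c hc
    · exact Nat.zero_le _

theorem sum_map_sylvester (h : IsStrictPartition M) :
    ((sylvester M).map (2 * · + 1)).sum = M.sum := by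
  induction M using sylvester.induct with
  | case1 => simp [sylvester]
  | case2 x M ih =>
    have hM := h.of_cons
    have hinner := ih hM.tail
    have hlen := length_sylvester_tail_le hM
    have hlt := h.headD_lt
    have hsucc (L : List ℕ) : ((L.map (· + 1)).map (2 * · + 1)).sum
        = (L.map (2 * · + 1)).sum + 2 * L.length := by
      induction L with
      | nil => rfl
      | cons a L ih =>
        simp only [List.map_cons, List.sum_cons, List.length_cons, ih]
        ring
    have hsum : M.sum = M.headD 0 + M.tail.sum := by cases M <;> simp
    rw [sylvester, List.map_cons, List.map_append, List.sum_cons, List.sum_append, hsucc, hinner,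
      List.map_replicate, List.sum_replicate, List.sum_cons, hsum, smul_eq_mul]
    omega

theorem sylvester_injOn : Set.InjOn sylvester {M | IsStrictPartition M} := by
  intro M hM N hN heq
  induction M using sylvester.induct generalizing N with
  | case1 => cases N <;> simp_all [sylvester]
  | case2 x M ih =>
    cases N with
    | nil => simp [sylvester] at heq
    | cons y N =>
      have hxy : x = y := by
        simpa only [heq, headD_sylvester_add_length hN, List.headD_cons] using
          (headD_sylvester_add_length hM).symm
      have hM' := IsStrictPartition.of_cons hM
      have hN' := IsStrictPartition.of_cons hN
      simp only [sylvester, List.cons.injEq] at heq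
      have hinner := map_succ_append_replicate_zero_inj heq.2
      have hhead : M.headD 0 = N.headD 0 := by
        have hlenM := length_sylvester_tail_le hM'
        have hlenN := length_sylvester_tail_le hN'
        rw [hinner] at heq hlenM
        omega
      rw [hxy, hM'.eq_of_headD_eq_of_tail_eq hN' hhead (ih hM'.tail hN'.tail hinner)]

theorem sub_length_mem_image_succ_iff (h : IsStrictPartition (x :: M)) :
    x - (sylvester M).length ∈ (sylvester M).toFinset.image (· + 1) ↔ x - 1 ∈ M := by
  have hlen := headD_sylvester_add_length h.of_cons
  have hlt := h.headD_lt
  rw [h.sub_one_mem_iff, ← sylvester_ne_nil_iff]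
  simp only [mem_image, List.mem_toFinset]
  constructor
  · rintro ⟨c, hc, hcx⟩
    have := le_headD_of_sortedGE (sylvester_sortedGE h.of_cons) hc 0
    exact ⟨List.ne_nil_of_mem hc, by omega⟩
  · rintro ⟨hM, hx⟩
    exact ⟨_, headD_mem hM 0, by omega⟩

theorem card_insert_image_succ_sylvester (h : IsStrictPartition (x :: M)) :
    #(insert (x - (sylvester M).length) ((sylvester M).toFinset.image (· + 1))) =
      #(sylvester M).toFinset + if x - 1 ∈ M then 0 else 1 := by
  rw [card_insert_eq_ite, card_image_of_injective _ (add_left_injective 1)]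
  simp only [sub_length_mem_image_succ_iff h]
  split_ifs <;> rfl

theorem toFinset_sylvester_cons_cons {y : ℕ} (hyx : y < x) :
    (sylvester (x :: y :: M)).toFinset =
      (if x = y + 1 then ∅ else {0}) ∪
        insert (y - (sylvester M).length) ((sylvester M).toFinset.image (· + 1)) := by
  have hzeros : x - y - 1 ≠ 0 ↔ x ≠ y + 1 := by omega
  split_ifs with hxy
  · ext
    simp [sylvester, hxy]
  · ext
    simp [sylvester, hzeros, hxy, or_comm]

theorem card_toFinset_sylvester_cons_cons {y : ℕ} (h : IsStrictPartition (x :: y :: M)) :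
    #(sylvester (x :: y :: M)).toFinset =
      #(sylvester M).toFinset + (if y - 1 ∈ M then 0 else 1) +
        if x - 1 ∈ y :: M then 0 else 1 := by
  have hyx : y < x := h.headD_lt
  have hgap : x - 1 ∈ y :: M ↔ x = y + 1 := by simp [h.sub_one_mem_iff]
  have hzero : 0 ∉ insert (y - (sylvester M).length) ((sylvester M).toFinset.image (· + 1)) := by
    have := headD_sylvester_add_length h.of_cons.of_cons
    have := h.of_cons.headD_lt
    simp only [mem_insert, mem_image, Nat.add_eq_zero_iff, one_ne_zero, and_false, exists_false,
      or_false]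
    omega
  simp only [toFinset_sylvester_cons_cons hyx, hgap,
    ← card_insert_image_succ_sylvester h.of_cons]
  split_ifs
  · rw [empty_union, add_zero]
  · exact card_insert_of_notMem hzero

theorem card_runMinima_toFinset_cons (h : IsStrictPartition (x :: M)) :
    #(runMinima (x :: M).toFinset) = #(runMinima M.toFinset) + if x - 1 ∈ M then 0 else 1 := by
  have hmax : ∀ a ∈ M.toFinset, a < x := fun a ha ↦ h.lt_of_mem (List.mem_toFinset.1 ha)
  simp only [List.toFinset_cons, card_runMinima_insert hmax, List.mem_toFinset]

theorem card_toFinset_sylvester (h : IsStrictPartition M) :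
    #(sylvester M).toFinset = #(runMinima M.toFinset) := by
  induction M using sylvester.induct with
  | case1 => simp [sylvester, runMinima]
  | case2 x M ih =>
    rw [card_runMinima_toFinset_cons h]
    rcases M with - | ⟨y, M⟩
    · have hx := h.pos x List.mem_cons_self
      have hrep : sylvester [x] = List.replicate x 0 := by
        simp [sylvester, ← List.replicate_succ, Nat.sub_add_cancel hx]
      simp [hrep, List.toFinset_replicate_of_ne_zero hx.ne', runMinima]
    · rw [card_runMinima_toFinset_cons h.of_cons, card_toFinset_sylvester_cons_cons h,
        show #(sylvester M).toFinset = #(runMinima M.toFinset) from ih h.of_cons.of_cons]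

end sylvester

section Partition

variable {n : ℕ} (p : n.Partition)

theorem isStrictPartition_sort_parts (hp : p.parts.Nodup) :
    IsStrictPartition (p.parts.sort (· ≥ ·)) where
  sortedGT := (p.parts.pairwise_sort (· ≥ ·)).sortedGE.sortedGT_of_nodup <| by
    rwa [← Multiset.coe_nodup, Multiset.sort_eq]
  pos _ ha := p.parts_pos ((Multiset.mem_sort _).1 ha)

/-- Sylvester's bijection, as a map from the partitions of `n` into distinct parts to the
partitions of `n` into odd parts. -/
def sylvesterPartition (hp : p.parts.Nodup) : n.Partition where
  parts := ((sylvester (p.parts.sort (· ≥ ·))).map (2 * · + 1) : List ℕ)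
  parts_pos := by
    intro a ha
    obtain ⟨b, -, rfl⟩ := List.mem_map.1 ha
    exact Nat.succ_pos _
  parts_sum := by
    rw [Multiset.sum_coe, sum_map_sylvester (isStrictPartition_sort_parts p hp),
      ← Multiset.sum_coe, Multiset.sort_eq, p.parts_sum]

theorem odd_of_mem_parts_sylvesterPartition (hp : p.parts.Nodup) {a : ℕ}
    (ha : a ∈ (sylvesterPartition p hp).parts) : Odd a := by
  obtain ⟨b, -, rfl⟩ := List.mem_map.1 ha
  exact odd_two_mul_add_one b

theorem card_toFinset_parts_sylvesterPartition (hp : p.parts.Nodup) :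
    #(sylvesterPartition p hp).parts.toFinset =
      #{a ∈ p.parts.toFinset | a + 1 ∉ p.parts} := by
  set M := p.parts.sort (· ≥ ·) with hM
  have himage : (sylvesterPartition p hp).parts.toFinset =
      (sylvester M).toFinset.image (2 * · + 1) := by
    ext
    simp [sylvesterPartition, hM]
  have hparts : M.toFinset = p.parts.toFinset := by
    ext
    simp [hM]
  rw [himage, card_image_of_injective _ two_mul_add_one_injective,
    card_toFinset_sylvester (isStrictPartition_sort_parts p hp), card_runMinima, hparts]
  simp only [Multiset.mem_toFinset]

variable {p} in
theorem sylvesterPartition_inj {q : n.Partition} (hp : p.parts.Nodup) (hq : q.parts.Nodup)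
    (h : sylvesterPartition p hp = sylvesterPartition q hq) : p = q := by
  have hMp := isStrictPartition_sort_parts p hp
  have hMq := isStrictPartition_sort_parts q hq
  have hperm := Multiset.coe_eq_coe.1 (congrArg Nat.Partition.parts h)
  rw [List.map_perm_map_iff two_mul_add_one_injective] at hperm
  have hlist := hperm.eq_of_sortedGE (sylvester_sortedGE hMp) (sylvester_sortedGE hMq)
  have hsort := sylvester_injOn hMp hMq hlist
  ext1
  rw [← p.parts.sort_eq (· ≥ ·), hsort, Multiset.sort_eq]

end Partition

theorem card_nodup_eq_card_odd (n : ℕ) :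
    Nat.card {p : n.Partition // p.parts.Nodup} =
      Nat.card {p : n.Partition // ∀ a ∈ p.parts, Odd a} := by
  simpa [Nat.subtype_card, Fintype.card_subtype, Nat.Partition.odds, Nat.Partition.restricted,
    Nat.Partition.distincts] using (Nat.Partition.card_odds_eq_card_distincts n).symm

/-- Sylvester's bijection between the partitions of `n` into distinct parts and those into odd
parts.  Surjectivity comes from Euler's theorem that the two kinds are equinumerous. -/
noncomputable def sylvesterEquiv (n : ℕ) :
    {p : n.Partition // p.parts.Nodup} ≃ {p : n.Partition // ∀ a ∈ p.parts, Odd a} :=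
  Equiv.ofBijective
    (fun p ↦ ⟨sylvesterPartition p.1 p.2, fun _ ↦ odd_of_mem_parts_sylvesterPartition p.1 p.2⟩)
    ((Nat.bijective_iff_injective_and_card _).2
      ⟨fun p q h ↦ Subtype.ext (sylvesterPartition_inj p.2 q.2 (congrArg Subtype.val h)),
        card_nodup_eq_card_odd n⟩)

/-- **Sylvester's stratification of Euler's theorem.**  The number of partitions of `n` into
odd parts having exactly `ℓ` distinct part values equals the number of partitions of `n` into
distinct parts whose parts form exactly `ℓ` maximal runs of consecutive integers. -/
theorem sylvester_stratification (n ℓ : ℕ) (hn : 0 < n) (hℓ : 0 < ℓ) :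
    Nat.card {p : n.Partition //
        (∀ a ∈ p.parts, Odd a) ∧ p.parts.toFinset.card = ℓ} =
    Nat.card {p : n.Partition //
        p.parts.Nodup ∧
        (p.parts.toFinset.filter (fun a => a + 1 ∉ p.parts)).card = ℓ} := by
  have hstat (p : {p : n.Partition // p.parts.Nodup}) :
      #{a ∈ p.1.parts.toFinset | a + 1 ∉ p.1.parts} = ℓ ↔
        #(sylvesterEquiv n p).1.parts.toFinset = ℓ :=
    (card_toFinset_parts_sylvesterPartition p.1 p.2).congr_left.symm
  rw [← Nat.card_congr (Equiv.subtypeSubtypeEquivSubtypeInter _ _),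
    ← Nat.card_congr (Equiv.subtypeSubtypeEquivSubtypeInter _ _)]
  exact (Nat.card_congr ((sylvesterEquiv n).subtypeEquiv hstat)).symm
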